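/- Let d ≥ 3 and n ≥ 3. Consider any d-dimensional rectilinear drawing of the complete balanced d-partite d-uniform hypergraph K_{d×n}^d, i.e., an injective map v : Fin d × Fin n → ℝ^d whose image is a set of nd points in general position in ℝ^d (no d+1 of the points lie on a common hyperplane), where for each i ∈ Fin d the set {v(i,j) : j ∈ Fin n} is the i-th part. Then the number of crossing pairs of hyperedges, i.e., the number of unordered pairs {f, g} of functions f, g : Fin d → Fin n with f(i) ≠ g(i) for every i ∈ Fin d such that the intrinsic (relative) interiors of the convex hulls of {v(i, f(i)) : i ∈ Fin d} and {v(i, g(i)) : i ∈ Fin d} have a common point, is at least n^d (n-1)^d / (9 · 2^d). -/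

import Mathlib

/-!
Choosing a subset of size `3` in two of the parts and of size `2` in all the others, and averaging
over all such choices, it suffices to find one crossing pair when the parts have sizes
`3, 3, 2, …, 2`.

Lift each vertex `x` to `(x, 1)` in a space of dimension `d + 1`. By general position, the three
lifts of the first part together with the vectors `A - s • B`, where `A, B` are the lifts of a part
of size `2` and `s > 0` is small, form a basis. The median of the three coordinates along the first
part is a continuous odd function. Among the three lifts of the second part, two have medians of
the same weak sign, so the median vanishes somewhere on the segment from one of them to the
negative of the other. At such a point the outer two coordinates have opposite signs, and reading
off all coordinates gives a linear relation in which every part contributes a nonnegative multiple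
of one lift minus a nonnegative multiple of another. General position makes all the weights
positive, and separating the signs gives a common point of two relative interiors.
-/

open Finset Module

section Simplex

lemma linearIndependent_prodMk_one_iff {k W ω : Type*} [Ring k] [AddCommGroup W] [Module k W]
    {p : ω → W} :
    LinearIndependent k (fun x => (p x, (1 : k))) ↔ AffineIndependent k p := by
  rw [linearIndependent_iff', affineIndependent_iff]
  refine forall₂_congr fun s w => ?_
  simp only [Prod.smul_mk, smul_eq_mul, mul_one, Prod.ext_iff, Prod.fst_sum, Prod.snd_sum,
    Prod.fst_zero, Prod.snd_zero, and_imp]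
  exact imp.swap

variable {E ι : Type*} [NormedAddCommGroup E] [NormedSpace ℝ E] [Fintype ι] {F : ι → E}

lemma exists_linearMap_sum_smul_prodMk_one_eq (hF : AffineIndependent ℝ F) :
    ∃ L : E × ℝ →ₗ[ℝ] ι → ℝ, ∀ w : ι → ℝ, ∑ i, w i = 1 → L (∑ i, w i • F i, 1) = w := by
  obtain ⟨L, hL⟩ := LinearMap.exists_leftInverse_of_injective _ <| LinearMap.ker_eq_bot.2 <|
    linearIndependent_iff_injective_fintypeLinearCombination.1 <|
      linearIndependent_prodMk_one_iff.2 hF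
  refine ⟨L, fun w hw => ?_⟩
  have hlift : Fintype.linearCombination ℝ (fun i => (F i, (1 : ℝ))) w = (∑ i, w i • F i, 1) := by
    simp [Fintype.linearCombination_apply, Prod.ext_iff, Prod.fst_sum, Prod.snd_sum, hw]
  rw [← hlift]
  exact LinearMap.congr_fun hL w

lemma sum_smul_mem_intrinsicInterior_convexHull [FiniteDimensional ℝ E]
    (hF : AffineIndependent ℝ F) {a : ι → ℝ} (ha : ∀ i, 0 < a i) (ha₁ : ∑ i, a i = 1) :
    ∑ i, a i • F i ∈ intrinsicInterior ℝ (convexHull ℝ (Set.range F)) := by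
  have hull_mem {w : ι → ℝ} (hw : ∀ i, 0 < w i) (hw₁ : ∑ i, w i = 1) :
      ∑ i, w i • F i ∈ convexHull ℝ (Set.range F) :=
    (convex_convexHull ℝ _).sum_mem (fun i _ => (hw i).le) hw₁
      fun i _ => subset_convexHull _ _ ⟨i, rfl⟩
  obtain ⟨L, hL⟩ := exists_linearMap_sum_smul_prodMk_one_eq hF
  have hLc : Continuous L := L.continuous_of_finiteDimensional
  let U : Set (affineSpan ℝ (convexHull ℝ (Set.range F))) := {y | ∀ i, 0 < L ((y : E), 1) i}
  have hUo : IsOpen U := by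
    simp only [U, Set.ofPred_forall]
    exact isOpen_iInter_of_finite fun i => isOpen_lt continuous_const (by fun_prop)
  have hU : U ⊆ (↑) ⁻¹' convexHull ℝ (Set.range F) := by
    rintro ⟨y, hy⟩ hyU
    rw [affineSpan_convexHull] at hy
    obtain ⟨w, hw, rfl⟩ := eq_affineCombination_of_mem_affineSpan_of_fintype hy
    simp only [U, Set.mem_ofPred_eq, affineCombination_eq_linear_combination univ F w hw,
      hL w hw] at hyU
    simpa only [Set.mem_preimage, affineCombination_eq_linear_combination univ F w hw]
      using hull_mem hyU hw
  have hmem := hull_mem ha ha₁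
  refine mem_intrinsicInterior.2
    ⟨⟨_, subset_affineSpan _ _ hmem⟩, mem_interior.2 ⟨U, hU, hUo, fun i => ?_⟩, rfl⟩
  simpa only [hL a ha₁] using ha i

lemma centerMass_mem_intrinsicInterior_convexHull [FiniteDimensional ℝ E] [Nonempty ι]
    (hF : AffineIndependent ℝ F) {a : ι → ℝ} (ha : ∀ i, 0 < a i) :
    univ.centerMass a F ∈ intrinsicInterior ℝ (convexHull ℝ (Set.range F)) := by
  have hsum : 0 < ∑ i, a i := sum_pos (fun i _ => ha i) univ_nonempty
  simp only [centerMass, smul_sum, smul_smul]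
  exact sum_smul_mem_intrinsicInterior_convexHull hF (fun i => mul_pos (inv_pos.2 hsum) (ha i))
    (by rw [← mul_sum, inv_mul_cancel₀ hsum.ne'])

end Simplex

section GeneralPosition

variable {E V ω α : Type*} [AddCommGroup E] [Module ℝ E] [AddCommGroup V] [Module ℝ V]

/-- A family of points of a `d`-dimensional space is in *general position* if no `d + 1` of its
members lie on a common hyperplane. -/
def InGeneralPosition (v : ω → E) : Prop :=
  ∀ s : Finset ω, #s = finrank ℝ E + 1 → AffineIndependent ℝ (fun x : s => v x)

/-- A family of vectors of an `N`-dimensional space is in *linear general position* if any `N` of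
its members are linearly independent. -/
def InLinearGeneralPosition (u : ω → V) : Prop :=
  ∀ s : Finset ω, #s = finrank ℝ V → LinearIndependent ℝ (fun x : s => u x)

lemma InGeneralPosition.comp {v : ω → E} (hv : InGeneralPosition v) {e : α → ω}
    (he : Function.Injective e) : InGeneralPosition (v ∘ e) := by
  intro s hs
  exact (hv (s.map ⟨e, he⟩) (by rwa [card_map])).comp_embedding
    ⟨fun x : s => ⟨e x, mem_map_of_mem _ x.2⟩, fun x y h => Subtype.ext <| he <| by simpa using h⟩

lemma InGeneralPosition.inLinearGeneralPosition_prodMk_one [FiniteDimensional ℝ E] {v : ω → E}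
    (hv : InGeneralPosition v) : InLinearGeneralPosition (fun x => (v x, (1 : ℝ))) := by
  intro s hs
  exact linearIndependent_prodMk_one_iff.2 (hv s (by simpa using hs))

namespace InLinearGeneralPosition

variable {u : ω → V}

lemma comp (hu : InLinearGeneralPosition u) {e : α → ω} (he : Function.Injective e) :
    InLinearGeneralPosition (u ∘ e) := by
  intro s hs
  exact (hu (s.map ⟨e, he⟩) (by rwa [card_map])).comp
    (fun x : s => ⟨e x, mem_map_of_mem _ x.2⟩) fun x y h => Subtype.ext <| he <| by simpa using h

lemma units_smul (hu : InLinearGeneralPosition u) (c : ω → ℝˣ) :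
    InLinearGeneralPosition (c • u) :=
  fun s hs => (hu s hs).units_smul fun x => c x

variable [Fintype ω]

lemma linearIndependent_comp (hu : InLinearGeneralPosition u) (hω : finrank ℝ V ≤ Fintype.card ω)
    [Fintype α] {e : α → ω} (he : Function.Injective e) (hα : Fintype.card α ≤ finrank ℝ V) :
    LinearIndependent ℝ (u ∘ e) := by
  obtain ⟨s, hes, hs⟩ := exists_superset_card_eq (s := univ.map ⟨e, he⟩) (by simpa using hα)
    (by simpa using hω)
  exact (hu s hs).comp (fun x => ⟨e x, hes (mem_map_of_mem _ (mem_univ x))⟩)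
    fun x y h => he (by simpa using h)

lemma finrank_lt_card_support (hu : InLinearGeneralPosition u)
    (hω : finrank ℝ V ≤ Fintype.card ω) {z : ω → ℝ} (hz : z ≠ 0) (hzu : ∑ x, z x • u x = 0) :
    finrank ℝ V < #{x | z x ≠ 0} := by
  by_contra! hle
  obtain ⟨s, hzs, hs⟩ := exists_superset_card_eq hle hω
  have hsum : ∑ x : s, z x • u x = 0 := by
    rw [sum_coe_sort s fun x => z x • u x, ← hzu]
    refine sum_subset (subset_univ s) fun x _ hx => ?_
    rw [show z x = 0 by by_contra h; exact hx (hzs (by simpa using h)), zero_smul]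
  refine hz (funext fun x => ?_)
  by_contra h
  exact h <| Fintype.linearIndependent_iff.1 (hu s hs) (fun x => z x) hsum
    ⟨x, hzs (by simpa using h)⟩

lemma exists_sum_smul_eq_zero_of_finrank_le [FiniteDimensional ℝ V]
    (hu : InLinearGeneralPosition u) {s : Finset ω} (hs : finrank ℝ V ≤ #s) :
    ∃ c : ω → ℝ, (∀ x ∉ s, c x = 1) ∧ ∑ x, c x • u x = 0 := by
  classical
  obtain ⟨t, hts, ht⟩ := exists_subset_card_eq hs
  have hspan : Submodule.span ℝ (u '' t) = ⊤ := by
    simpa [Set.image_eq_range] using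
      (hu t ht).span_eq_top_of_card_eq_finrank' (by simpa using ht)
  obtain ⟨c, hc⟩ := Submodule.mem_span_image_finset_iff_exists_fun' ℝ |>.1
    (hspan ▸ Submodule.mem_top : -∑ x ∈ tᶜ, u x ∈ Submodule.span ℝ (u '' t))
  refine ⟨fun x => if x ∈ t then c x else 1, fun x hx => if_neg fun h => hx (hts h), ?_⟩
  have hin : ∑ x ∈ t, (if x ∈ t then c x else 1) • u x = -∑ x ∈ tᶜ, u x :=
    hc ▸ sum_congr rfl fun x hx => by rw [if_pos hx]
  have hout : ∑ x ∈ tᶜ, (if x ∈ t then c x else 1) • u x = ∑ x ∈ tᶜ, u x :=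
    sum_congr rfl fun x hx => by rw [if_neg (mem_compl.1 hx), one_smul]
  rw [← sum_add_sum_compl t, hin, hout, neg_add_cancel]

end InLinearGeneralPosition

open Filter Topology in
lemma eventually_forall_pos_add_mul [Finite ω] {z c : ω → ℝ} (hz : ∀ x, 0 ≤ z x)
    (hc : ∀ x, z x = 0 → 0 < c x) : ∀ᶠ ε in 𝓝[>] (0 : ℝ), ∀ x, 0 < z x + ε * c x := by
  refine eventually_all.2 fun x => ?_
  rcases (hz x).eq_or_lt with hx | hx
  · filter_upwards [self_mem_nhdsWithin] with ε hε
    simpa [← hx] using mul_pos hε (hc x hx.symm)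
  · have hcont : Continuous fun ε : ℝ => z x + ε * c x := by fun_prop
    exact (hcont.continuousAt.eventually (lt_mem_nhds (by simpa using hx))).filter_mono
      nhdsWithin_le_nhds

lemma InLinearGeneralPosition.exists_pos_sum_smul_eq_zero [FiniteDimensional ℝ V] [Fintype ω]
    {u : ω → V} (hu : InLinearGeneralPosition u) (hω : finrank ℝ V ≤ Fintype.card ω) {z : ω → ℝ}
    (hz : ∀ x, 0 ≤ z x) (hz₀ : z ≠ 0) (hzu : ∑ x, z x • u x = 0) :
    ∃ z' : ω → ℝ, (∀ x, 0 < z' x) ∧ ∑ x, z' x • u x = 0 := by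
  -- The support of `z` spans, so some relation has coefficient `1` wherever `z` vanishes; adding a
  -- small multiple of it makes all coefficients positive.
  obtain ⟨c, hc, hcu⟩ :=
    hu.exists_sum_smul_eq_zero_of_finrank_le (hu.finrank_lt_card_support hω hz₀ hzu).le
  obtain ⟨ε, hε⟩ := (eventually_forall_pos_add_mul (c := c) hz fun x hx => by
    rw [hc x (by simpa using hx)]; exact one_pos).exists
  refine ⟨fun x => z x + ε * c x, hε, ?_⟩
  simp only [add_smul, mul_smul, sum_add_distrib, ← smul_sum, hzu, hcu, smul_zero, add_zero]

end GeneralPosition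

section Median

/-- The median of the three entries of a vector, written as their sum minus the largest and the
smallest one so that continuity and oddness are visible. -/
def median (x : Fin 3 → ℝ) : ℝ :=
  x 0 + x 1 + x 2 - max (max (x 0) (x 1)) (x 2) - min (min (x 0) (x 1)) (x 2)

lemma continuous_median : Continuous median := by
  unfold median
  fun_prop

lemma odd_median : Function.Odd median := by
  intro x
  simp only [median, Pi.neg_apply, max_neg_neg, min_neg_neg]
  ring

lemma median_eq_of_le_of_le {x : Fin 3 → ℝ} {i j k : Fin 3} (hij : i ≠ j) (hjk : j ≠ k)
    (hik : i ≠ k) (hxij : x i ≤ x j) (hxjk : x j ≤ x k) : median x = x j := by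
  unfold median
  fin_cases i <;> fin_cases j <;> fin_cases k <;> grind

lemma exists_nonneg_nonpos_of_median_eq_zero {x : Fin 3 → ℝ} (hx : median x = 0) :
    ∃ i k, i ≠ k ∧ 0 ≤ x i ∧ x k ≤ 0 ∧ ∀ m, m ≠ i ∧ m ≠ k → x m = 0 := by
  let σ := Tuple.sort x
  have hσ : Monotone (x ∘ σ) := Tuple.monotone_sort x
  have hne {a b : Fin 3} (hab : a ≠ b) : σ a ≠ σ b := σ.injective.ne hab
  have h₀₁ : x (σ 0) ≤ x (σ 1) := hσ (by decide)
  have h₁₂ : x (σ 1) ≤ x (σ 2) := hσ (by decide)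
  have h₁ : x (σ 1) = 0 :=
    median_eq_of_le_of_le (hne (by decide)) (hne (by decide)) (hne (by decide)) h₀₁ h₁₂ ▸ hx
  refine ⟨σ 2, σ 0, hne (by decide), h₁ ▸ h₁₂, h₁ ▸ h₀₁, fun m hm => ?_⟩
  obtain ⟨t, rfl⟩ := σ.surjective m
  fin_cases t
  exacts [absurd rfl hm.2, h₁, absurd rfl hm.1]

lemma exists_ne_nonneg_mul {α : Type*} [Fintype α] (hα : 2 < Fintype.card α) (c : α → ℝ) :
    ∃ j l, j ≠ l ∧ 0 ≤ c j * c l := by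
  obtain ⟨j, l, hjl, h⟩ :=
    Fintype.exists_ne_map_eq_of_card_lt (fun j => decide (0 ≤ c j)) (by simpa using hα)
  refine ⟨j, l, hjl, mul_nonneg_iff_pos_imp_nonneg.2 ?_⟩
  grind

lemma exists_mem_segment_neg_eq_zero {V : Type*} [AddCommGroup V] [Module ℝ V] [TopologicalSpace V]
    [IsTopologicalAddGroup V] [ContinuousSMul ℝ V] {m : V → ℝ} (hm : Continuous m)
    (hodd : Function.Odd m) {α : Type*} [Fintype α] (hα : 2 < Fintype.card α) (w : α → V) :
    ∃ j l, j ≠ l ∧ ∃ z ∈ segment ℝ (w j) (-w l), m z = 0 := by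
  obtain ⟨j, l, hjl, h⟩ := exists_ne_nonneg_mul hα fun j => m (w j)
  refine ⟨j, l, hjl, ?_⟩
  have h₀ : (0 : ℝ) ∈ Set.uIcc (m (w j)) (m (-w l)) := by
    rw [hodd, Set.mem_uIcc]
    grind [mul_nonneg_iff]
  have himage : (m '' segment ℝ (w j) (-w l)).OrdConnected :=
    ((convex_segment _ _).isPreconnected.image _ hm.continuousOn).ordConnected
  exact himage.uIcc_subset (Set.mem_image_of_mem m (left_mem_segment ℝ _ _))
    (Set.mem_image_of_mem m (right_mem_segment ℝ _ _)) h₀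

lemma zero_notMem_segment_neg {V : Type*} [AddCommGroup V] [Module ℝ V] {x : Fin 2 → V}
    (hx : LinearIndependent ℝ x) : (0 : V) ∉ segment ℝ (x 0) (-x 1) := by
  rintro ⟨a, b, -, -, hab, h₀⟩
  have hcoeff := Fintype.linearIndependent_iff.1 hx ![a, -b] (by simpa [Fin.sum_univ_two] using h₀)
  have ha : a = 0 := hcoeff 0
  have hb : -b = 0 := hcoeff 1
  linarith

end Median

section DifferenceCone

variable {V α β μ : Type*}

section Module

variable [AddCommGroup V] [Module ℝ V]

/-- The union of the cones spanned by `p i` and `-p k` for distinct `i` and `k`. For vectors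
`p i = (v i, 1)` its elements record a nonnegative multiple of one point minus a nonnegative
multiple of another one. -/
def differenceCone (p : α → V) : Set V :=
  {y | ∃ i k, i ≠ k ∧ ∃ a b : ℝ, 0 ≤ a ∧ 0 ≤ b ∧ y = a • p i - b • p k}

lemma differenceCone_comp_subset (p : α → V) {e : β → α} (he : Function.Injective e) :
    differenceCone (p ∘ e) ⊆ differenceCone p := by
  rintro y ⟨i, k, hik, h⟩
  exact ⟨e i, e k, he.ne hik, h⟩

lemma segment_neg_subset_differenceCone (p : α → V) {i k : α} (hik : i ≠ k) :
    segment ℝ (p i) (-p k) ⊆ differenceCone p := by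
  rintro _ ⟨a, b, ha, hb, -, rfl⟩
  exact ⟨i, k, hik, a, b, ha, hb, by rw [smul_neg, sub_eq_add_neg]⟩

lemma smul_sub_smul_mem_differenceCone (p : Fin 2 → V) {s : ℝ} (hs : 0 ≤ s) (t : ℝ) :
    t • (p 0 - s • p 1) ∈ differenceCone p := by
  rcases le_total 0 t with ht | ht
  · exact ⟨0, 1, by decide, t, t * s, ht, mul_nonneg ht hs, by module⟩
  · exact ⟨1, 0, by decide, -t * s, -t, mul_nonneg (neg_nonneg.2 ht) hs, neg_nonneg.2 ht, by module⟩

lemma sum_smul_mem_differenceCone_of_median_eq_zero (p : Fin 3 → V) {c : Fin 3 → ℝ}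
    (hc : median c = 0) : ∑ i, c i • p i ∈ differenceCone p := by
  obtain ⟨i, k, hik, hi, hk, h₀⟩ := exists_nonneg_nonpos_of_median_eq_zero hc
  refine ⟨i, k, hik, c i, -c k, hi, neg_nonneg.2 hk, ?_⟩
  rw [Fintype.sum_eq_add i k hik fun m hm => by rw [h₀ m hm, zero_smul]]
  module

end Module

variable [NormedAddCommGroup V] [NormedSpace ℝ V]

open Topology in
lemma exists_pos_linearIndependent_sub_smul [Finite α] [Finite μ] {P : α → V} {A : μ → V}
    (h : LinearIndependent ℝ (Sum.elim P A)) (B : μ → V) :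
    ∃ s : ℝ, 0 < s ∧ LinearIndependent ℝ (Sum.elim P fun m => A m - s • B m) := by
  have hcont : Continuous fun s : ℝ => Sum.elim P fun m => A m - s • B m := by
    refine continuous_pi ?_
    rintro (i | m) <;> simp only [Sum.elim_inl, Sum.elim_inr] <;> fun_prop
  have hev : ∀ᶠ s in 𝓝[>] (0 : ℝ), LinearIndependent ℝ (Sum.elim P fun m => A m - s • B m) :=
    (hcont.continuousAt.eventually (isOpen_setOfPred_linearIndependent.mem_nhds
      (by simpa using h))).filter_mono nhdsWithin_le_nhds
  obtain ⟨s, hs, hs₀⟩ := (hev.and self_mem_nhdsWithin).exists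
  exact ⟨s, hs₀, hs⟩

lemma exists_segment_add_differenceCone_eq_zero [Fintype α] [Fintype μ] (hα : 2 < Fintype.card α)
    (Q : α → V) {P : Fin 3 → V} {R : μ → Fin 2 → V} (hV : finrank ℝ V = 3 + Fintype.card μ)
    (hPR : LinearIndependent ℝ (Sum.elim P fun m => R m 0)) :
    ∃ j l, j ≠ l ∧ ∃ z ∈ segment ℝ (Q j) (-Q l), ∃ x ∈ differenceCone P, ∃ y : μ → V,
      (∀ m, y m ∈ differenceCone (R m)) ∧ z + x + ∑ m, y m = 0 := by
  have : FiniteDimensional ℝ V := .of_finrank_pos (by lia)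
  obtain ⟨s, hs, hLI⟩ := exists_pos_linearIndependent_sub_smul hPR fun m => R m 1
  let b := basisOfLinearIndependentOfCardEqFinrank hLI (by simp [hV])
  let coords : V →ₗ[ℝ] Fin 3 → ℝ := LinearMap.pi fun i => b.coord (Sum.inl i)
  have hcoords : Continuous coords := coords.continuous_of_finiteDimensional
  obtain ⟨j, l, hjl, z, hz, hmed⟩ := exists_mem_segment_neg_eq_zero
    (continuous_median.comp hcoords) (odd_median.comp_odd fun x => map_neg coords x) hα Q
  refine ⟨j, l, hjl, z, hz, ∑ i, b.repr (-z) (.inl i) • P i,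
    sum_smul_mem_differenceCone_of_median_eq_zero P ?_,
    fun m => b.repr (-z) (.inr m) • (R m 0 - s • R m 1),
    fun m => smul_sub_smul_mem_differenceCone (R m) hs.le _, ?_⟩
  · have hneg : median (-coords z) = 0 := by rw [odd_median, neg_eq_zero]; exact hmed
    rwa [← map_neg] at hneg
  · have hrepr : ∑ i, b.repr (-z) (.inl i) • P i +
        ∑ m, b.repr (-z) (.inr m) • (R m 0 - s • R m 1) = -z := by
      simpa only [b, Fintype.sum_sum_type, coe_basisOfLinearIndependentOfCardEqFinrank,
        Sum.elim_inl, Sum.elim_inr] using b.sum_repr (-z)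
    rw [add_assoc, hrepr, add_neg_cancel]

end DifferenceCone

section Parts

variable {ι : Type*} [Fintype ι]

lemma sum_eq_add_add_sum_subtype {M : Type*} [AddCommMonoid M] {p q : ι} (hpq : p ≠ q)
    [Fintype {i // i ≠ q ∧ i ≠ p}] (f : ι → M) :
    ∑ i, f i = f p + f q + ∑ i : {i // i ≠ q ∧ i ≠ p}, f i := by
  classical
  rw [← add_sum_erase univ f (mem_univ p),
    ← add_sum_erase (univ.erase p) f (mem_erase.2 ⟨hpq.symm, mem_univ q⟩), add_assoc,
    sum_subtype (p := fun i => i ≠ q ∧ i ≠ p) ((univ.erase p).erase q) fun i => by simp]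

lemma exists_forall_mem_sum_eq {M : Type*} [AddCommMonoid M] {S : ι → Set M} {p q : ι}
    (hpq : p ≠ q) [Fintype {i // i ≠ q ∧ i ≠ p}] {x z : M} (hx : x ∈ S p) (hz : z ∈ S q)
    {y : {i // i ≠ q ∧ i ≠ p} → M} (hy : ∀ m : {i // i ≠ q ∧ i ≠ p}, y m ∈ S m) :
    ∃ y' : ι → M, y' q = z ∧ (∀ i, y' i ∈ S i) ∧ ∑ i, y' i = z + x + ∑ m, y m := by
  classical
  let y' : ι → M := fun i => if hi : i ≠ q ∧ i ≠ p then y ⟨i, hi⟩ else if i = q then z else x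
  have hyp : y' p = x := by simp [y', hpq]
  have hyq : y' q = z := by simp [y']
  have hyμ (m : {i // i ≠ q ∧ i ≠ p}) : y' m = y m := dif_pos m.2
  refine ⟨y', hyq, fun i => ?_, ?_⟩
  · by_cases hi : i ≠ q ∧ i ≠ p
    · exact hyμ ⟨i, hi⟩ ▸ hy ⟨i, hi⟩
    · obtain rfl | rfl : i = q ∨ i = p := by tauto
      · exact hyq ▸ hz
      · exact hyp ▸ hx
  · simp only [sum_eq_add_add_sum_subtype hpq, hyp, hyq, hyμ, add_comm x z]

lemma InLinearGeneralPosition.exists_sum_differenceCone_eq_zero {κ : ι → Type*}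
    [∀ i, Fintype (κ i)] {V : Type*} [NormedAddCommGroup V] [NormedSpace ℝ V]
    {H : (Σ i, κ i) → V} (hH : InLinearGeneralPosition H)
    (hV : finrank ℝ V = Fintype.card ι + 1) {p q : ι} (hpq : p ≠ q)
    (hp : 2 < Fintype.card (κ p)) (hq : 2 < Fintype.card (κ q))
    (hκ : ∀ i, 1 < Fintype.card (κ i)) :
    ∃ y : ι → V, y ≠ 0 ∧ (∀ i, y i ∈ differenceCone fun x => H ⟨i, x⟩) ∧ ∑ i, y i = 0 := by
  classical
  let μ := {i // i ≠ q ∧ i ≠ p}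
  have hcard : Fintype.card ι = 2 + Fintype.card μ := by
    rw [Fintype.card_eq_sum_ones, sum_eq_add_add_sum_subtype hpq, ← Fintype.card_eq_sum_ones]
  obtain ⟨P⟩ : Nonempty (Fin 3 ↪ κ p) :=
    Function.Embedding.nonempty_of_card_le (by rwa [Fintype.card_fin])
  have hR (m : μ) : Nonempty (Fin 2 ↪ κ m) :=
    Function.Embedding.nonempty_of_card_le (by rw [Fintype.card_fin]; exact hκ m)
  let R (m : μ) : Fin 2 ↪ κ m := (hR m).some
  let e : Fin 3 ⊕ μ → Σ i, κ i := Sum.elim (fun t => ⟨p, P t⟩) fun m => ⟨m, R m 0⟩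
  have he : Function.Injective e :=
    (sigma_mk_injective.comp P.injective).sumElim
      (fun m m' h => Subtype.ext (congrArg Sigma.fst h))
      fun t m h => m.2.2 (congrArg Sigma.fst h).symm
  have hVe : finrank ℝ V = Fintype.card (Fin 3 ⊕ μ) := by
    rw [hV, hcard, Fintype.card_sum, Fintype.card_fin]
    ring
  have hω : finrank ℝ V ≤ Fintype.card (Σ i, κ i) := hVe ▸ Fintype.card_le_of_injective e he
  have hLI := hH.linearIndependent_comp hω he hVe.ge
  rw [Sum.comp_elim] at hLI
  obtain ⟨j, l, hjl, z, hz, x, hx, y, hy, hsum⟩ := exists_segment_add_differenceCone_eq_zero hq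
    (fun t => H ⟨q, t⟩) (P := fun t => H ⟨p, P t⟩) (R := fun (m : μ) t => H ⟨m, R m t⟩)
    (by simpa using hVe) hLI
  obtain ⟨y', hyq, hy', hsum'⟩ := exists_forall_mem_sum_eq hpq
    (S := fun i => differenceCone fun t => H ⟨i, t⟩)
    (differenceCone_comp_subset _ P.injective hx) (segment_neg_subset_differenceCone _ hjl hz)
    fun m => differenceCone_comp_subset _ (R m).injective (hy m)
  refine ⟨y', ?_, hy', hsum'.trans hsum⟩
  rintro rfl
  obtain rfl : 0 = z := hyq
  have hjlLI : LinearIndependent ℝ (H ∘ ![⟨q, j⟩, ⟨q, l⟩]) :=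
    hH.linearIndependent_comp hω (by simpa) (by rw [Fintype.card_fin]; lia)
  exact zero_notMem_segment_neg hjlLI hz

end Parts

section Crossing

variable {ι E : Type*} {κ : ι → Type*} [NormedAddCommGroup E] [NormedSpace ℝ E]
  {v : (Σ i, κ i) → E} {f g : ∀ i, κ i}

/-- Two hyperedges, each given by the vertex it chooses in every part, *cross* if they are vertex
disjoint and the relative interiors of the simplices they span meet. -/
def Crossing (v : (Σ i, κ i) → E) (f g : ∀ i, κ i) : Prop :=
  (∀ i, f i ≠ g i) ∧
    (intrinsicInterior ℝ (convexHull ℝ (Set.range fun i => v ⟨i, f i⟩)) ∩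
      intrinsicInterior ℝ (convexHull ℝ (Set.range fun i => v ⟨i, g i⟩))).Nonempty

/-- The unordered pairs of crossing hyperedges. -/
def crossingPairs (v : (Σ i, κ i) → E) : Set (Sym2 (∀ i, κ i)) :=
  {P | ∃ f g, P = s(f, g) ∧ Crossing v f g}

lemma Crossing.symm (h : Crossing v f g) : Crossing v g f :=
  ⟨fun i => (h.1 i).symm, Set.inter_comm _ _ ▸ h.2⟩

lemma mk_mem_crossingPairs : s(f, g) ∈ crossingPairs v ↔ Crossing v f g := by
  refine ⟨?_, fun h => ⟨f, g, rfl, h⟩⟩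
  rintro ⟨f', g', hfg, h⟩
  obtain ⟨rfl, rfl⟩ | ⟨rfl, rfl⟩ := Sym2.eq_iff.1 hfg
  exacts [h, h.symm]

variable [Fintype ι]

lemma Crossing.of_sum_smul_eq [FiniteDimensional ℝ E] [Nonempty ι] (hfg : ∀ i, f i ≠ g i)
    (hf : AffineIndependent ℝ fun i => v ⟨i, f i⟩) (hg : AffineIndependent ℝ fun i => v ⟨i, g i⟩)
    {a b : ι → ℝ} (ha : ∀ i, 0 < a i) (hb : ∀ i, 0 < b i) (hsum : ∑ i, a i = ∑ i, b i)
    (hvsum : ∑ i, a i • v ⟨i, f i⟩ = ∑ i, b i • v ⟨i, g i⟩) : Crossing v f g := by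
  refine ⟨hfg, _, centerMass_mem_intrinsicInterior_convexHull hf ha, ?_⟩
  have hcenter := centerMass_mem_intrinsicInterior_convexHull hg hb
  rwa [centerMass, ← hsum, ← hvsum] at hcenter

lemma InLinearGeneralPosition.crossing_of_sum_smul_eq [FiniteDimensional ℝ E]
    (hE : finrank ℝ E = Fintype.card ι)
    (hH : InLinearGeneralPosition fun x => (v x, (1 : ℝ))) (hfg : ∀ i, f i ≠ g i)
    {a b : ι → ℝ} (ha : ∀ i, 0 ≤ a i) (hb : ∀ i, 0 ≤ b i) (hab : Sum.elim a b ≠ 0)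
    (hsum : ∑ i, a i • (v ⟨i, f i⟩, (1 : ℝ)) = ∑ i, b i • (v ⟨i, g i⟩, (1 : ℝ))) :
    Crossing v f g := by
  obtain ⟨i₀, -⟩ := Function.ne_iff.1 hab
  have : Nonempty ι := i₀.elim .intro .intro
  let e : ι ⊕ ι → Σ i, κ i := Sum.elim (fun i => ⟨i, f i⟩) fun i => ⟨i, g i⟩
  have he : Function.Injective e := by
    rintro (i | i) (j | j) h <;> obtain ⟨rfl, h⟩ := Sigma.mk.inj_iff.1 h
    exacts [rfl, (hfg i (eq_of_heq h)).elim, (hfg i (eq_of_heq h).symm).elim, rfl]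
  have hfinrank : finrank ℝ (E × ℝ) = Fintype.card ι + 1 := by simp [hE]
  have hcard : finrank ℝ (E × ℝ) ≤ Fintype.card (ι ⊕ ι) := by
    rw [hfinrank, Fintype.card_sum]
    exact Nat.add_le_add_left Fintype.card_pos _
  have hHe := hH.comp he
  let σ : ι ⊕ ι → ℝˣ := Sum.elim (fun _ => 1) fun _ => -1
  have hsigned (c : ι ⊕ ι → ℝ) :
      ∑ x, c x • (σ • ((fun x => (v x, (1 : ℝ))) ∘ e)) x = 0 ↔
        ∑ i, c (.inl i) • (v ⟨i, f i⟩, (1 : ℝ)) = ∑ i, c (.inr i) • (v ⟨i, g i⟩, (1 : ℝ)) := by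
    rw [Fintype.sum_sum_type, ← sub_eq_zero (a := ∑ i, c (.inl i) • _), sub_eq_add_neg,
      ← sum_neg_distrib]
    simp only [σ, e, Pi.smul_apply', Function.comp_apply, Sum.elim_inl, Sum.elim_inr, one_smul,
      Units.neg_smul, smul_neg]
  obtain ⟨c, hc, hc₀⟩ := (hHe.units_smul σ).exists_pos_sum_smul_eq_zero hcard
    (Sum.forall.2 ⟨ha, hb⟩) hab ((hsigned _).2 hsum)
  have hc_sum := (hsigned c).1 hc₀
  refine .of_sum_smul_eq hfg ?_ ?_ (fun i => hc (.inl i)) (fun i => hc (.inr i)) ?_ ?_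
  · exact linearIndependent_prodMk_one_iff.1
      (hHe.linearIndependent_comp hcard Sum.inl_injective (by lia))
  · exact linearIndependent_prodMk_one_iff.1
      (hHe.linearIndependent_comp hcard Sum.inr_injective (by lia))
  · simpa [Prod.snd_sum] using congrArg Prod.snd hc_sum
  · simpa [Prod.fst_sum] using congrArg Prod.fst hc_sum

lemma InGeneralPosition.exists_crossing [∀ i, Fintype (κ i)]
    (hE : finrank ℝ E = Fintype.card ι) (hv : InGeneralPosition v) {p q : ι} (hpq : p ≠ q)
    (hp : 2 < Fintype.card (κ p)) (hq : 2 < Fintype.card (κ q))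
    (hκ : ∀ i, 1 < Fintype.card (κ i)) : ∃ f g, Crossing v f g := by
  have : FiniteDimensional ℝ E := .of_finrank_pos (hE ▸ Fintype.card_pos_iff.2 ⟨p⟩)
  have hH := hv.inLinearGeneralPosition_prodMk_one
  obtain ⟨y, hy₀, hy, hsum⟩ :=
    hH.exists_sum_differenceCone_eq_zero (by simp [hE]) hpq hp hq hκ
  choose f g hfg a b ha hb hy using hy
  refine ⟨f, g, hH.crossing_of_sum_smul_eq hE hfg ha hb (fun hab => hy₀ (funext fun i => ?_)) ?_⟩
  · have hai : a i = 0 := congrFun hab (.inl i)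
    have hbi : b i = 0 := congrFun hab (.inr i)
    simp [hy i, hai, hbi]
  · simpa only [hy, sum_sub_distrib, sub_eq_zero] using hsum

lemma InGeneralPosition.exists_crossing_mem (hE : finrank ℝ E = Fintype.card ι)
    (hv : InGeneralPosition v) {S : ∀ i, Finset (κ i)} {p q : ι} (hpq : p ≠ q) (hp : 2 < #(S p))
    (hq : 2 < #(S q)) (hS : ∀ i, 1 < #(S i)) :
    ∃ f g, Crossing v f g ∧ ∀ i, f i ∈ S i ∧ g i ∈ S i := by
  have hinj : Function.Injective (Sigma.map id fun i => Subtype.val : (Σ i, S i) → Σ i, κ i) :=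
    Function.injective_id.sigma_map fun i => Subtype.val_injective
  obtain ⟨f, g, hfg, hmeet⟩ := (hv.comp hinj).exists_crossing hE hpq
    (by rwa [Fintype.card_coe]) (by rwa [Fintype.card_coe]) fun i => by simpa using hS i
  exact ⟨fun i => f i, fun i => g i, ⟨fun i h => hfg i (Subtype.ext h), hmeet⟩,
    fun i => ⟨(f i).2, (g i).2⟩⟩

end Crossing

section Averaging

variable {ι : Type*} [Fintype ι] {κ : ι → Type*} [∀ i, Fintype (κ i)] {k : ι → ℕ}

lemma card_filter_mem_and_mem_powersetCard {α : Type*} [Fintype α] [DecidableEq α] {a b : α}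
    (hab : a ≠ b) {m : ℕ} (hm : 2 ≤ m) :
    #{s ∈ powersetCard m (univ : Finset α) | a ∈ s ∧ b ∈ s} =
      (Fintype.card α - 2).choose (m - 2) := by
  have h := card_filter_powersetCard_subset {a, b} univ m (subset_univ _)
    (by rwa [card_pair hab])
  simpa only [insert_subset_iff, singleton_subset_iff, card_univ, card_pair hab] using h

lemma card_filter_forall_mem_piFinset_powersetCard [DecidableEq ι]
    [∀ i, DecidableEq (κ i)] {f g : ∀ i, κ i} (hfg : ∀ i, f i ≠ g i) (hk : ∀ i, 2 ≤ k i) :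
    #{S ∈ Fintype.piFinset fun i => powersetCard (k i) (univ : Finset (κ i)) |
        ∀ i, f i ∈ S i ∧ g i ∈ S i} = ∏ i, (Fintype.card (κ i) - 2).choose (k i - 2) := by
  rw [← prod_congr rfl fun i _ => card_filter_mem_and_mem_powersetCard (hfg i) (hk i),
    ← Fintype.card_piFinset]
  congr 1
  ext S
  simp only [mem_filter, Fintype.mem_piFinset, forall_and]

lemma prod_choose_two_le_prod_choose_two_mul_card {X : Finset (Sym2 (∀ i, κ i))}
    (hk : ∀ i, 2 ≤ k i) (hkκ : ∀ i, k i ≤ Fintype.card (κ i))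
    (hX : ∀ f g, s(f, g) ∈ X → ∀ i, f i ≠ g i)
    (hXS : ∀ S : ∀ i, Finset (κ i), (∀ i, #(S i) = k i) →
      ∃ f g, s(f, g) ∈ X ∧ ∀ i, f i ∈ S i ∧ g i ∈ S i) :
    ∏ i, (Fintype.card (κ i)).choose 2 ≤ (∏ i, (k i).choose 2) * #X := by
  classical
  let N := ∏ i, (Fintype.card (κ i) - 2).choose (k i - 2)
  have hN : 0 < N := prod_pos fun i _ => Nat.choose_pos (Nat.sub_le_sub_right (hkκ i) 2)
  let r (S : ∀ i, Finset (κ i)) (P : Sym2 (∀ i, κ i)) : Prop := ∀ f ∈ P, ∀ i, f i ∈ S i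
  have hr (S f g) : r S s(f, g) ↔ ∀ i, f i ∈ S i ∧ g i ∈ S i := by
    simp only [r, Sym2.ball, forall_and]
  have hcount : ∏ i, (Fintype.card (κ i)).choose (k i) ≤ #X * N := by
    have h := card_mul_le_card_mul r (m := 1) (n := N)
      (s := Fintype.piFinset fun i => powersetCard (k i) (univ : Finset (κ i))) (t := X) ?_ ?_
    · simpa using h
    · intro S hS
      simp only [Fintype.mem_piFinset, mem_powersetCard_univ] at hS
      obtain ⟨f, g, hfg, hS⟩ := hXS S hS
      exact card_pos.2 ⟨s(f, g), (mem_bipartiteAbove r).2 ⟨hfg, (hr S f g).2 hS⟩⟩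
    · refine Sym2.ind fun f g hfg => ?_
      simp only [bipartiteBelow, hr]
      exact (card_filter_forall_mem_piFinset_powersetCard (hX f g hfg) hk).le
  refine Nat.le_of_mul_le_mul_right ?_ hN
  calc (∏ i, (Fintype.card (κ i)).choose 2) * N
      = (∏ i, (k i).choose 2) * ∏ i, (Fintype.card (κ i)).choose (k i) := by
        simp only [N, ← prod_mul_distrib]
        exact prod_congr rfl fun i _ => by rw [← Nat.choose_mul (hk i), mul_comm]
    _ ≤ (∏ i, (k i).choose 2) * (#X * N) := Nat.mul_le_mul_left _ hcount
    _ = (∏ i, (k i).choose 2) * #X * N := (mul_assoc _ _ _).symm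

end Averaging

section Main

variable {ι E : Type*} {κ : ι → Type*} [Fintype ι] [∀ i, Fintype (κ i)] [NormedAddCommGroup E]
  [NormedSpace ℝ E]

lemma InGeneralPosition.prod_choose_two_le_nine_mul_ncard {v : (Σ i, κ i) → E}
    (hE : finrank ℝ E = Fintype.card ι) (hv : InGeneralPosition v) {p q : ι} (hpq : p ≠ q)
    (hp : 3 ≤ Fintype.card (κ p)) (hq : 3 ≤ Fintype.card (κ q)) :
    ∏ i, (Fintype.card (κ i)).choose 2 ≤ 9 * (crossingPairs v).ncard := by
  classical
  by_cases! hκ : ∃ i, Fintype.card (κ i) < 2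
  · obtain ⟨i, hi⟩ := hκ
    rw [prod_eq_zero (mem_univ i) (Nat.choose_eq_zero_of_lt hi)]
    exact Nat.zero_le _
  let k (i : ι) : ℕ := if i = p ∨ i = q then 3 else 2
  have hk₂ (i : ι) : 2 ≤ k i := by grind
  have hkκ (i : ι) : k i ≤ Fintype.card (κ i) := by
    have := hκ i
    grind
  have hk_prod : ∏ i, (k i).choose 2 = 9 := by
    rw [Fintype.prod_eq_mul p q hpq fun i hi => by simp [k, hi]]
    simp [k]
  rw [Set.ncard_eq_toFinset_card _ (Set.toFinite _), ← hk_prod]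
  refine prod_choose_two_le_prod_choose_two_mul_card hk₂ hkκ (fun f g hfg => ?_) fun S hS => ?_
  · exact (mk_mem_crossingPairs.1 ((Set.Finite.mem_toFinset _).1 hfg)).1
  · obtain ⟨f, g, hfg, hfgS⟩ := hv.exists_crossing_mem hE (S := S) hpq (by simp [hS, k])
      (by simp [hS, k]) fun i => hS i ▸ hk₂ i
    exact ⟨f, g, (Set.Finite.mem_toFinset _).2 (mk_mem_crossingPairs.2 hfg), hfgS⟩

theorem crossing_lower_bound_improved_general {v : (Σ i, κ i) → E}
    (hE : finrank ℝ E = Fintype.card ι) (hv : InGeneralPosition v) {p q : ι} (hpq : p ≠ q)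
    (hp : 3 ≤ Fintype.card (κ p)) (hq : 3 ≤ Fintype.card (κ q)) :
    (∏ i, (Fintype.card (κ i) : ℝ) * ((Fintype.card (κ i) : ℝ) - 1)) / (9 * 2 ^ Fintype.card ι) ≤
      (crossingPairs v).ncard := by
  have h : (∏ i, (Fintype.card (κ i)).choose 2 : ℝ) ≤ 9 * (crossingPairs v).ncard :=
    mod_cast hv.prod_choose_two_le_nine_mul_ncard hE hpq hp hq
  simp only [Nat.cast_choose_two, prod_div_distrib, prod_const, card_univ] at h
  rwa [mul_comm, ← div_div, div_le_iff₀' (by norm_num)]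

end Main

/-- Every `d`-dimensional rectilinear drawing of the complete balanced
`d`-partite `d`-uniform hypergraph `K_{d×n}^d` (vertices in general position in `ℝ^d`,
with the `i`-th part `{v (i, j) : j}`) has at least `n^d (n-1)^d / (9 · 2^d)` crossing
pairs of hyperedges, for `d ≥ 3` and `n ≥ 3`. -/
theorem crossing_lower_bound_improved (d n : ℕ) (hd : 3 ≤ d) (hn : 3 ≤ n)
    (v : Fin d × Fin n → EuclideanSpace ℝ (Fin d))
    (hinj : Function.Injective v)
    (hgen : ∀ s : Finset (Fin d × Fin n), s.card = d + 1 →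
      AffineIndependent ℝ (fun i : s => v i.1)) :
    (n : ℝ) ^ d * ((n : ℝ) - 1) ^ d / (9 * 2 ^ d) ≤
      ({P : Sym2 (Fin d → Fin n) | ∃ f g : Fin d → Fin n,
          P = s(f, g) ∧ (∀ i : Fin d, f i ≠ g i) ∧
          (intrinsicInterior ℝ (convexHull ℝ (Set.range fun i : Fin d => v (i, f i))) ∩
           intrinsicInterior ℝ (convexHull ℝ (Set.range fun i : Fin d => v (i, g i)))).Nonempty} :
        Set (Sym2 (Fin d → Fin n))).ncard := by
  have hv : InGeneralPosition v := fun s hs => hgen s (by simpa using hs)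
  simpa [mul_pow, crossingPairs, Crossing] using crossing_lower_bound_improved_general (by simp)
    (hv.comp (Equiv.sigmaEquivProd (Fin d) (Fin n)).injective)
    (p := ⟨0, by lia⟩) (q := ⟨1, by lia⟩) (by simp) (by simpa) (by simpa)
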